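/- arXiv:1810.02793 — 9 statements merged into one kernel-verified Lean document; each statement's English description precedes it below -/
import Mathlib

section
/- Let E be a nonzero finite-dimensional real normed vector space equipped with a bilinear multiplication m : E × E → E and a two-sided unit e ∈ E (i.e. m(e,x) = x = m(x,e) for all x) such that the norm is multiplicative: ‖m(x,y)‖ = ‖x‖·‖y‖ for all x, y ∈ E. Then the real dimension of E is 1, 2, 4, or 8. -/
section hurwitz
open scoped InnerProductSpace

variable {E : Type*} [NormedAddCommGroup E] [InnerProductSpace ℝ E]

/-- conjugation -/
noncomputable def hcj (e x : E) : E := (2 * ⟪x, e⟫_ℝ) • e - x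

/-- composition algebra hypotheses -/
structure HComp (m : E →ₗ[ℝ] E →ₗ[ℝ] E) (e : E) : Prop where
  ul : ∀ x : E, m e x = x
  ur : ∀ x : E, m x e = x
  nm : ∀ x y : E, ‖m x y‖ = ‖x‖ * ‖y‖
  e1 : ⟪e, e⟫_ℝ = 1

namespace HComp

variable {m : E →ₗ[ℝ] E →ₗ[ℝ] E} {e : E} (H : HComp m e)
include H

lemma sq (x y : E) : ⟪m x y, m x y⟫_ℝ = ⟪x, x⟫_ℝ * ⟪y, y⟫_ℝ := by
  simp only [real_inner_self_eq_norm_sq, H.nm]; ring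

lemma sl (x y z : E) : ⟪m x y, m x z⟫_ℝ = ⟪x, x⟫_ℝ * ⟪y, z⟫_ℝ := by
  have h := H.sq x (y + z)
  have h1 := H.sq x y
  have h2 := H.sq x z
  simp only [map_add, inner_add_left, inner_add_right] at h
  rw [real_inner_comm (m x y) (m x z), real_inner_comm y z] at h
  linarith

lemma exch (x y u z : E) :
    ⟪m x y, m u z⟫_ℝ + ⟪m u y, m x z⟫_ℝ = 2 * ⟪x, u⟫_ℝ * ⟪y, z⟫_ℝ := by
  have h := H.sl (x + u) y z
  have h1 := H.sl x y z
  have h2 := H.sl u y z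
  simp only [map_add, LinearMap.add_apply, inner_add_left, inner_add_right] at h
  rw [real_inner_comm x u] at h
  linarith

lemma adjl (x y z : E) : ⟪m x y, z⟫_ℝ = ⟪y, m (hcj e x) z⟫_ℝ := by
  have h := H.exch x y e z
  simp only [H.ul] at h
  simp only [hcj, map_sub, map_smul, LinearMap.sub_apply, LinearMap.smul_apply, H.ul,
    inner_sub_right, inner_smul_right]
  linarith

lemma adjr (x y z : E) : ⟪m y x, z⟫_ℝ = ⟪y, m z (hcj e x)⟫_ℝ := by
  have h := H.exch y x z e
  simp only [H.ur] at h
  simp only [hcj, map_sub, map_smul, H.ur,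
    inner_sub_right, inner_smul_right]
  rw [real_inner_comm (m z x) y] at *
  linarith

lemma cjcj (x : E) : hcj e (hcj e x) = x := by
  simp only [hcj, inner_sub_left, inner_smul_left, H.e1]
  simp
  module

omit H in
lemma cjadj (x y : E) : ⟪hcj e x, y⟫_ℝ = ⟪x, hcj e y⟫_ℝ := by
  simp only [hcj, inner_sub_left, inner_smul_left, inner_sub_right, inner_smul_right]
  rw [real_inner_comm e y]
  simp
  ring

lemma cjmul (x y : E) : hcj e (m x y) = m (hcj e y) (hcj e x) := by
  refine ext_inner_right ℝ fun t => ?_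
  rw [cjadj, H.adjl (hcj e y), H.cjcj, H.adjl x, real_inner_comm _ (hcj e x), H.adjr t]

omit H in
lemma cj_of_orth {x : E} (h : ⟪x, e⟫_ℝ = 0) : hcj e x = -x := by simp [hcj, h]

/-- subalgebra -/
structure Sub (m : E →ₗ[ℝ] E →ₗ[ℝ] E) (e : E) (B : Submodule ℝ E) : Prop where
  one : e ∈ B
  mul : ∀ x ∈ B, ∀ y ∈ B, m x y ∈ B

omit H in
lemma Sub.cj {B : Submodule ℝ E} (S : Sub m e B) {x : E} (hx : x ∈ B) : hcj e x ∈ B :=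
  B.sub_mem (B.smul_mem _ S.one) hx

section dbl
variable {B : Submodule ℝ E} (S : Sub m e B) {j : E} (j1 : ⟪j, j⟫_ℝ = 1)
  (hj : ∀ b ∈ B, ⟪j, b⟫_ℝ = 0)
include S hj

lemma orth {b d : E} (hb : b ∈ B) (hd : d ∈ B) : ⟪m b j, d⟫_ℝ = 0 := by
  rw [H.adjl]; exact hj _ (S.mul _ (S.cj hb) _ hd)

lemma swap {b : E} (hb : b ∈ B) : m b j = m j (hcj e b) := by
  have h1 := H.cjmul b j
  rw [cj_of_orth (H.orth S hj hb S.one), cj_of_orth (hj e S.one)] at h1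
  simpa using h1

lemma r1' {a : E} (ha : a ∈ B) (b : E) : m a (m j b) = m j (m (hcj e a) b) := by
  refine ext_inner_right ℝ fun t => ?_
  have h := H.exch j b (hcj e a) t
  rw [hj _ (S.cj ha)] at h
  rw [H.adjl a, H.adjl j (m (hcj e a) b), cj_of_orth (hj e S.one)]
  simp only [map_neg, LinearMap.neg_apply, inner_neg_right]
  linarith

lemma r1 {a d : E} (ha : a ∈ B) (hd : d ∈ B) : m a (m d j) = m (m d a) j := by
  rw [H.swap S hj hd, H.r1' S hj ha, ← H.cjmul, ← H.swap S hj (S.mul _ hd _ ha)]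

lemma r2 (b : E) {c : E} (hc : c ∈ B) : m (m b j) c = m (m b (hcj e c)) j := by
  refine ext_inner_right ℝ fun t => ?_
  have h := H.exch b j t (hcj e c)
  rw [hj _ (S.cj hc)] at h
  rw [H.adjr c, H.adjr j (m b (hcj e c)), cj_of_orth (hj e S.one)]
  simp only [map_neg, inner_neg_right]
  rw [real_inner_comm (m b (hcj e c)) (m t j)] at h
  linarith

include j1 in
lemma r3 {b d : E} (hb : b ∈ B) (hd : d ∈ B) : m (m b j) (m d j) = - m (hcj e d) b := by
  refine ext_inner_right ℝ fun t => ?_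
  have h := H.exch b j t (m d j)
  have h2 : ⟪j, m d j⟫_ℝ = ⟪d, e⟫_ℝ := by
    have := H.exch d j e j
    rw [H.ul, j1, real_inner_comm] at this
    rw [real_inner_comm j] at *
    linarith
  have h3 : ⟪m (m d b) j, m t j⟫_ℝ = ⟪m d b, t⟫_ℝ := by
    have := H.exch (m d b) j t j
    rw [j1, real_inner_comm (m (m d b) j)] at this
    linarith
  rw [H.adjr, cj_of_orth (H.orth S hj hd S.one)]
  rw [H.r1 S hj hb hd, h2] at h
  simp only [hcj, map_neg, inner_neg_right, inner_neg_left, map_sub, map_smul, H.ul,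
    LinearMap.sub_apply, LinearMap.smul_apply, inner_sub_left, inner_smul_left]
  simp only [conj_trivial]
  linarith [real_inner_comm (m t j) (m (m d b) j)]

include j1 in
lemma assoc {a c d : E} (ha : a ∈ B) (hc : c ∈ B) (hd : d ∈ B) :
    m d (m a c) = m (m d a) c := by
  have key : ∀ b ∈ B, ⟪m d (m a c), b⟫_ℝ = ⟪m (m d a) c, b⟫_ℝ := by
    intro b hb
    have h := H.exch a c (m b j) (m d j)
    rw [real_inner_comm _ a, H.orth S hj hb ha, H.r3 S j1 hj hb hd, H.r2 S hj b hc,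
      H.r1 S hj ha hd] at h
    have h3 := H.exch (m b (hcj e c)) j (m d a) j
    rw [j1, real_inner_comm (m (m b (hcj e c)) j)] at h3
    rw [H.adjl d, H.adjr c (m d a), real_inner_comm _ (m d a)]
    simp only [inner_neg_right] at h
    linarith
  have hB : m d (m a c) - m (m d a) c ∈ B :=
    B.sub_mem (S.mul _ hd _ (S.mul _ ha _ hc)) (S.mul _ (S.mul _ hd _ ha) _ hc)
  have := key _ hB
  rw [← sub_eq_zero, ← inner_sub_left, inner_self_eq_zero] at this
  exact sub_eq_zero.1 this

omit S hj in
include j1 in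
lemma inj {a b : E} (h : m a j = m b j) : a = b := by
  have h1 := H.sq (a - b) j
  rw [map_sub, LinearMap.sub_apply, h, j1] at h1
  simp only [sub_self, inner_zero_left, mul_one] at h1
  exact sub_eq_zero.1 (inner_self_eq_zero.1 h1.symm)

include j1 in
lemma double [FiniteDimensional ℝ E] : ∃ B' : Submodule ℝ E, Sub m e B' ∧ B ≤ B' ∧ j ∈ B' ∧
    Module.finrank ℝ B' = 2 * Module.finrank ℝ B ∧ (∀ b ∈ B, m b j ∈ B') := by
  have hm : ∀ b ∈ B, m b j ∈ B ⊔ B.map (m.flip j) := fun b hb =>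
    (le_sup_right : _ ≤ B ⊔ B.map (m.flip j)) ⟨b, hb, rfl⟩
  have hl : B ≤ B ⊔ B.map (m.flip j) := le_sup_left
  refine ⟨B ⊔ B.map (m.flip j), ⟨hl S.one, ?_⟩, hl, ?_, ?_, hm⟩
  · intro x hx y hy
    obtain ⟨a, ha, _, ⟨b, hb, rfl⟩, rfl⟩ := Submodule.mem_sup.1 hx
    obtain ⟨c, hc, _, ⟨d, hd, rfl⟩, rfl⟩ := Submodule.mem_sup.1 hy
    simp only [LinearMap.flip_apply, map_add, LinearMap.add_apply]
    rw [H.r1 S hj ha hd, H.r2 S hj b hc, H.r3 S j1 hj hb hd]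
    exact add_mem (add_mem (hl (S.mul _ ha _ hc)) (hm _ (S.mul _ hb _ (S.cj hc))))
      (add_mem (hm _ (S.mul _ hd _ ha)) (neg_mem (hl (S.mul _ (S.cj hd) _ hb))))
  · simpa [H.ul] using hm e S.one
  · have h := Submodule.finrank_sup_add_finrank_inf_eq B (B.map (m.flip j))
    have hd : B ⊓ B.map (m.flip j) = ⊥ := by
      rw [eq_bot_iff]
      rintro x ⟨hx, ⟨b, hb, rfl⟩⟩
      exact inner_self_eq_zero.1 (H.orth S hj hb hx)
    have hf : Module.finrank ℝ (B.map (m.flip j)) = Module.finrank ℝ B :=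
      
      (Submodule.equivMapOfInjective (m.flip j) (fun a b h => H.inj j1 h) B).finrank_eq.symm
    rw [hd, finrank_bot, hf] at h
    omega

end dbl

omit H in
lemma ex_orth [FiniteDimensional ℝ E] (B : Submodule ℝ E) (hB : B ≠ ⊤) :
    ∃ j : E, ⟪j, j⟫_ℝ = 1 ∧ ∀ b ∈ B, ⟪j, b⟫_ℝ = 0 := by
  have : Bᗮ ≠ ⊥ := fun h => hB (Submodule.orthogonal_eq_bot_iff.1 h)
  obtain ⟨v, hv, hv0⟩ := Submodule.exists_mem_ne_zero_of_ne_bot this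
  refine ⟨‖v‖⁻¹ • v, ?_, fun b hb => ?_⟩
  · rw [real_inner_self_eq_norm_sq, norm_smul, norm_inv, norm_norm,
      inv_mul_cancel₀ (norm_ne_zero_iff.2 hv0)]; simp
  · rw [inner_smul_left, Submodule.inner_left_of_mem_orthogonal hb hv, mul_zero]

theorem main [FiniteDimensional ℝ E] :
    Module.finrank ℝ E = 1 ∨ Module.finrank ℝ E = 2 ∨
      Module.finrank ℝ E = 4 ∨ Module.finrank ℝ E = 8 := by
  have he : e ≠ 0 := by rintro rfl; simpa using H.e1
  have S0 : Sub m e (Submodule.span ℝ {e}) := by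
    refine ⟨Submodule.mem_span_singleton_self e, fun x hx y hy => ?_⟩
    obtain ⟨r, rfl⟩ := Submodule.mem_span_singleton.1 hx
    rw [map_smul, LinearMap.smul_apply, H.ul]
    exact Submodule.smul_mem _ _ hy
  have d0 : Module.finrank ℝ (Submodule.span ℝ {e}) = 1 := finrank_span_singleton he
  generalize Submodule.span ℝ {e} = B0 at S0 d0
  by_cases t0 : B0 = ⊤
  · subst t0; rw [finrank_top] at d0; exact Or.inl d0
  obtain ⟨i, i1, hi⟩ := ex_orth B0 t0
  obtain ⟨B1, S1, l1, iB, d1, -⟩ := H.double S0 i1 hi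
  by_cases t1 : B1 = ⊤
  · subst t1; rw [finrank_top] at d1; omega
  obtain ⟨j, j1, hj⟩ := ex_orth B1 t1
  obtain ⟨B2, S2, l2, jB, d2, -⟩ := H.double S1 j1 hj
  by_cases t2 : B2 = ⊤
  · subst t2; rw [finrank_top] at d2; omega
  obtain ⟨k, k1, hk⟩ := ex_orth B2 t2
  obtain ⟨B3, S3, l3, kB, d3, -⟩ := H.double S2 k1 hk
  by_cases t3 : B3 = ⊤
  · subst t3; rw [finrank_top] at d3; omega
  obtain ⟨l, hl1, hl⟩ := ex_orth B3 t3
  exfalso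
  have hiB2 := l2 iB
  -- B2 commutative
  have a1 := H.assoc S3 hl1 hl (l3 hiB2) kB (l3 jB)
  rw [H.r1 S2 hk jB hiB2] at a1
  have c1 := H.inj k1 a1
  -- i j = j i
  have c2 := H.swap S1 hj iB
  rw [cj_of_orth (hi e S0.one), c1] at c2
  have c3 := H.sq j i
  rw [j1, i1] at c3
  have c4 : m j i = 0 := by
    have : m j i = - m j i := by simpa using c2
    have h2 : (2 : ℝ) • m j i = 0 := by
      rw [two_smul]; nth_rewrite 2 [this]; exact add_neg_cancel _
    exact (smul_eq_zero.1 h2).resolve_left two_ne_zero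
  rw [c4] at c3
  simp at c3

end HComp
end hurwitz

section par
open MeasureTheory

theorem hpar {E : Type*} [NormedAddCommGroup E]
    [NormedSpace ℝ E] [FiniteDimensional ℝ E] [Nontrivial E]
    (m : E →ₗ[ℝ] E →ₗ[ℝ] E)
    (h_norm : ∀ x y : E, ‖m x y‖ = ‖x‖ * ‖y‖) (x y : E) :
    ‖x + y‖ * ‖x + y‖ + ‖x - y‖ * ‖x - y‖ = 2 * (‖x‖ * ‖x‖ + ‖y‖ * ‖y‖) := by
  letI : MeasurableSpace E := borel E
  haveI : BorelSpace E := ⟨rfl⟩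
  let μ : Measure E := Measure.addHaar
  obtain ⟨v, hv⟩ := exists_ne (0 : E)
  obtain ⟨f, -, hf⟩ := exists_dual_vector ℝ v (norm_ne_zero_iff.2 hv)
  let K : Set E := Metric.closedBall 0 1
  have hK : IsCompact K := isCompact_closedBall 0 1
  let Q : E → ℝ := fun x => ∫ z in K, (f (m z x)) ^ 2 ∂μ
  have hint : ∀ x y, IntegrableOn (fun z => f (m z x) * f (m z y)) K μ := fun x y => by
    refine ContinuousOn.integrableOn_compact hK (Continuous.continuousOn ?_)
    have c : ∀ x, Continuous fun z => m z x := fun x => (m.flip x).continuous_of_finiteDimensional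
    exact (f.continuous.comp (c x)).mul (f.continuous.comp (c y))
  have hint2 : ∀ x, IntegrableOn (fun z => f (m z x) ^ 2) K μ := fun x => by
    simpa only [sq] using hint x x
  have hQ : Q (x + y) + Q (x - y) = 2 * (Q x + Q y) := by
    simp only [Q]
    rw [← integral_add (hint2 _) (hint2 _), ← integral_add (hint2 _) (hint2 _),
      ← integral_const_mul]
    congr 1
    ext z
    simp only [map_add, map_sub]
    ring
  let c : ℝ := ∫ w in K, (f w) ^ 2 ∂μ
  have hc : 0 < c := by
    have hi : IntegrableOn (fun w => f w ^ 2) K μ :=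
      ContinuousOn.integrableOn_compact hK (f.continuous.pow 2).continuousOn
    have := (setIntegral_pos_iff_support_of_nonneg_ae (μ := μ) (s := K) (f := fun w => f w ^ 2)
      (Filter.Eventually.of_forall fun w => sq_nonneg _) hi).2
    apply this
    have ho : IsOpen (Function.support (fun w => f w ^ 2) ∩ Metric.ball (0 : E) 1) :=
      ((f.continuous.pow 2).isOpen_support).inter Metric.isOpen_ball
    refine lt_of_lt_of_le (ho.measure_pos μ ?_)
      (measure_mono (Set.inter_subset_inter_right _ Metric.ball_subset_closedBall))
    have hn : 0 < ‖v‖ := norm_pos_iff.2 hv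
    refine ⟨(2 * ‖v‖)⁻¹ • v, ?_, ?_⟩
    · simp [hf, hv]
    · rw [mem_ball_zero_iff, norm_smul, norm_inv, norm_mul, norm_norm]
      field_simp
      norm_num
  have hunit : ∀ x, ‖x‖ = 1 → Q x = c := by
    intro x hx
    have hnn : ∀ z, ‖m.flip x z‖ = ‖z‖ := fun z => by simp [h_norm, hx]
    have hinj : Function.Injective (m.flip x) := by
      rw [injective_iff_map_eq_zero]
      intro a ha
      rw [← norm_eq_zero, ← hnn, ha, norm_zero]
    have hsurj : Function.Surjective (m.flip x) := LinearMap.injective_iff_surjective.1 hinj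
    have him : m.flip x '' K = K := by
      ext w
      constructor
      · rintro ⟨z, hz, rfl⟩
        simpa [K, h_norm, hx] using hz
      · intro hw
        obtain ⟨z, rfl⟩ := hsurj w
        refine ⟨z, ?_, rfl⟩
        simpa [K, h_norm, hx] using hw
    have hdet : ENNReal.ofReal |LinearMap.det (m.flip x)| = 1 := by
      have h := Measure.addHaar_image_linearMap μ (m.flip x) K
      rw [him] at h
      have hp : μ K ≠ 0 := (Metric.measure_closedBall_pos μ 0 one_pos).ne'
      have hfin : μ K ≠ ⊤ := hK.measure_lt_top.ne
      exact ((ENNReal.mul_eq_right hp hfin).1 h.symm)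
    have hmp : MeasurePreserving (m.flip x) μ μ := by
      refine ⟨(m.flip x).continuous_of_finiteDimensional.measurable, ?_⟩
      have hd : |LinearMap.det (m.flip x)| = 1 := by simpa using hdet
      rw [Measure.map_linearMap_addHaar_eq_smul_addHaar μ (f := m.flip x)
        (by intro h; rw [h] at hd; simp at hd), abs_inv, hd]
      simp
    have hemb : MeasurableEmbedding (m.flip x) :=
      ((LinearMap.isClosedEmbedding_of_injective (LinearMap.ker_eq_bot.2 hinj))).measurableEmbedding
    have := hmp.setIntegral_image_emb hemb (fun w => f w ^ 2) K
    rw [him] at this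
    exact this.symm
  have hall : ∀ x, Q x = c * (‖x‖ * ‖x‖) := by
    intro x
    by_cases hx : x = 0
    · simp [Q, hx]
    have hn : ‖x‖ ≠ 0 := norm_ne_zero_iff.2 hx
    have h1 := hunit (‖x‖⁻¹ • x) (by rw [norm_smul, norm_inv, norm_norm, inv_mul_cancel₀ hn])
    have h2 : Q (‖x‖⁻¹ • x) = (‖x‖⁻¹) ^ 2 * Q x := by
      simp only [Q, map_smul, smul_eq_mul, mul_pow]
      rw [integral_const_mul]
    rw [← h1, h2]
    field_simp
  rw [hall, hall, hall, hall] at hQ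
  apply mul_left_cancel₀ hc.ne'
  linarith
end par

theorem normed_division_algebra_dim {E : Type*} [NormedAddCommGroup E]
    [NormedSpace ℝ E] [FiniteDimensional ℝ E] [Nontrivial E]
    (m : E →ₗ[ℝ] E →ₗ[ℝ] E) (e : E)
    (h_unit_left : ∀ x : E, m e x = x) (h_unit_right : ∀ x : E, m x e = x)
    (h_norm : ∀ x y : E, ‖m x y‖ = ‖x‖ * ‖y‖) :
    Module.finrank ℝ E = 1 ∨ Module.finrank ℝ E = 2 ∨
      Module.finrank ℝ E = 4 ∨ Module.finrank ℝ E = 8 := by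
  letI : InnerProductSpace ℝ E := InnerProductSpace.ofNorm ℝ (hpar m h_norm)
  have he : e ≠ 0 := by
    rintro rfl
    obtain ⟨v, hv⟩ := exists_ne (0 : E)
    exact hv (by rw [← h_unit_left v]; simp)
  have h1 : ‖e‖ = 1 := by
    have h := h_norm e e
    rw [h_unit_left] at h
    exact (mul_eq_left₀ (norm_ne_zero_iff.2 he)).1 h.symm
  exact HComp.main (m := m) (e := e) ⟨h_unit_left, h_unit_right, h_norm, by
    rw [real_inner_self_eq_norm_sq, h1]; norm_num⟩
end

section
/- For all octonions x and y, N(x·y) = N(x)·N(y), i.e. the octonions form a composition algebra. -/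
/-- The octonions, realized via the Cayley–Dickson construction as pairs of
real quaternions. -/
abbrev Octonion : Type := Quaternion ℝ × Quaternion ℝ

/-- Cayley–Dickson multiplication: `(a,b)·(c,d) = (a c − d̄ b, d a + b c̄)`. -/
noncomputable def octMul (x y : Octonion) : Octonion :=
  (x.1 * y.1 - star y.2 * x.2, y.2 * x.1 + x.2 * star y.1)

/-- Octonionic conjugation: `conj (a,b) = (ā, −b)`. -/
noncomputable def octConj (x : Octonion) : Octonion := (star x.1, -x.2)

/-- The octonionic norm: `N (a,b) = ‖a‖² + ‖b‖²` (sum of quaternionic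
norm-squares). -/
noncomputable def octN (x : Octonion) : ℝ :=
  Quaternion.normSq x.1 + Quaternion.normSq x.2

/-- The octonions form a composition algebra: `N(x·y) = N(x)·N(y)`. -/
theorem octonion_norm_mul (x y : Octonion) :
    octN (octMul x y) = octN x * octN y := by
  obtain ⟨a, b⟩ := x
  obtain ⟨c, d⟩ := y
  simp only [octN, octMul, Quaternion.normSq_def', Quaternion.re_sub, Quaternion.imI_sub,
    Quaternion.imJ_sub, Quaternion.imK_sub, Quaternion.re_add, Quaternion.imI_add,
    Quaternion.imJ_add, Quaternion.imK_add, Quaternion.re_mul, Quaternion.imI_mul,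
    Quaternion.imJ_mul, Quaternion.imK_mul, Quaternion.re_star, Quaternion.imI_star,
    Quaternion.imJ_star, Quaternion.imK_star]
  ring
end

section
/- The octonions form a division algebra: for all octonions x and y, if x·y = 0 then x = 0 or y = 0. -/
theorem octMul_normSq (x y : Octonion) :
    Quaternion.normSq (octMul x y).1 + Quaternion.normSq (octMul x y).2 =
      (Quaternion.normSq x.1 + Quaternion.normSq x.2) *
      (Quaternion.normSq y.1 + Quaternion.normSq y.2) := by
  simp only [octMul, Quaternion.normSq_def', Quaternion.re_sub, Quaternion.imI_sub,
    Quaternion.imJ_sub, Quaternion.imK_sub, Quaternion.re_add, Quaternion.imI_add,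
    Quaternion.imJ_add, Quaternion.imK_add, Quaternion.re_mul, Quaternion.imI_mul,
    Quaternion.imJ_mul, Quaternion.imK_mul, Quaternion.re_star, Quaternion.imI_star,
    Quaternion.imJ_star, Quaternion.imK_star]
  ring

theorem oct_eq_zero (x : Octonion)
    (h : Quaternion.normSq x.1 + Quaternion.normSq x.2 = 0) : x = 0 := by
  have h1 : 0 ≤ Quaternion.normSq x.1 := Quaternion.normSq_nonneg
  have h2 : 0 ≤ Quaternion.normSq x.2 := Quaternion.normSq_nonneg
  exact Prod.ext (Quaternion.normSq_eq_zero.1 (by linarith))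
    (Quaternion.normSq_eq_zero.1 (by linarith))

/-- The octonions form a division algebra: a product vanishes only if one of
its factors does. -/
theorem octonion_division (x y : Octonion) (h : octMul x y = 0) :
    x = 0 ∨ y = 0 := by
  have hn := octMul_normSq x y
  rw [h] at hn
  simp only [Prod.fst_zero, Prod.snd_zero, map_zero, add_zero] at hn
  rcases mul_eq_zero.1 hn.symm with h | h
  · exact Or.inl (oct_eq_zero x h)
  · exact Or.inr (oct_eq_zero y h)
end

section
/- The split octonions form a composition algebra: for all split octonions x and y, N(x·y) = N(x)·N(y). -/
/-- The split octonions, realized via the Cayley–Dickson construction as pairs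
of real quaternions. -/
abbrev SplitOctonion : Type := Quaternion ℝ × Quaternion ℝ

/-- Cayley–Dickson multiplication for split octonions:
`(a,b)·(c,d) = (a c + d̄ b, d a + b c̄)`. -/
noncomputable def soMul (x y : SplitOctonion) : SplitOctonion :=
  (x.1 * y.1 + star y.2 * x.2, y.2 * x.1 + x.2 * star y.1)

/-- The split-octonionic norm: `N (a,b) = ‖a‖² − ‖b‖²` (difference of
quaternionic norm-squares). -/
noncomputable def soN (x : SplitOctonion) : ℝ :=
  Quaternion.normSq x.1 - Quaternion.normSq x.2

/-- The split octonions form a composition algebra: `N(x·y) = N(x)·N(y)`. -/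
theorem splitOctonion_norm_mul (x y : SplitOctonion) :
    soN (soMul x y) = soN x * soN y := by
  obtain ⟨a, b⟩ := x
  obtain ⟨c, d⟩ := y
  simp only [soN, soMul, Quaternion.normSq_def', Quaternion.re_add, Quaternion.imI_add, Quaternion.imJ_add, Quaternion.imK_add, Quaternion.re_mul, Quaternion.imI_mul, Quaternion.imJ_mul, Quaternion.imK_mul, Quaternion.re_star, Quaternion.imI_star, Quaternion.imJ_star, Quaternion.imK_star]
  ring
end

section
/- For all octonions x and y, x·(conj(x)·y) = N(x)·y, i.e. the composition of left multiplication by x with left multiplication by conj(x) is scalar multiplication by the norm N(x) (the identity L_x L_{x̄} = (x,x)·Id). -/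
/-- The identity `L_x L_x̄ = (x,x)·Id`: for all octonions `x` and `y`,
`x·(x̄·y) = N(x) • y`. -/
theorem octonion_lmul_lmul_conj (x y : Octonion) :
    octMul x (octMul (octConj x) y) = octN x • y := by
  obtain ⟨a, b⟩ := x
  obtain ⟨c, d⟩ := y
  apply Prod.ext <;> ext <;>
    simp [octMul, octConj, octN, Quaternion.normSq_def'] <;> ring
end

section
/- The octonions are an alternative algebra: for all octonions x and y, (x·x)·y = x·(x·y) and y·(x·x) = (y·x)·x. -/
/-- The octonions are an alternative algebra:
`(x·x)·y = x·(x·y)` and `y·(x·x) = (y·x)·x`. -/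
theorem octonion_alternative (x y : Octonion) :
    octMul (octMul x x) y = octMul x (octMul x y) ∧
    octMul y (octMul x x) = octMul (octMul y x) x := by
  obtain ⟨a, b⟩ := x
  obtain ⟨c, d⟩ := y
  constructor <;> refine Prod.ext ?_ ?_ <;> ext <;>
    simp only [octMul, Quaternion.re_mul, Quaternion.imI_mul, Quaternion.imJ_mul,
      Quaternion.imK_mul, Quaternion.re_sub, Quaternion.imI_sub, Quaternion.imJ_sub,
      Quaternion.imK_sub, Quaternion.re_add, Quaternion.imI_add, Quaternion.imJ_add,
      Quaternion.imK_add, Quaternion.re_star, Quaternion.imI_star, Quaternion.imJ_star,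
      Quaternion.imK_star] <;>
    ring
end

section
/- Rigidity of the manifestly duality-invariant first-order action (no non-abelian Yang–Mills deformation): let ι be a finite type, let Ω : Matrix ι ι ℝ be invertible and antisymmetric (Ωᵀ = −Ω), and let C : ι → ι → ι → ℝ with components C^M_{NP} satisfy (i) antisymmetry in the last two indices, C^M_{NP} = −C^M_{PN}, and (ii) the symplectic-invariance condition on the lowered tensor C_{MNP} := Σ_Q Ω_{MQ} C^Q_{NP}, namely C_{NPM} = C_{MPN} for all M, N, P. Then C^M_{NP} = 0 for all M, N, P. In particular, structure constants of a gauge group whose adjoint action preserves the symplectic form Ω must vanish. -/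
open Finset Matrix

/-- Rigidity of the manifestly duality-invariant first-order action: if the
candidate structure constants `C^M_{NP}` are antisymmetric in their last two
indices and the lowered tensor `C_{MNP} = Σ_Q Ω_{MQ} C^Q_{NP}` (with `Ω`
invertible and antisymmetric) is symmetric under the exchange of its first
and last indices, then all structure constants vanish: no non-abelian
Yang–Mills deformation preserves the symplectic form `Ω`. -/
theorem no_yangMills_deformation_first_order {ι : Type*} [Fintype ι]
    [DecidableEq ι] (Ω : Matrix ι ι ℝ) (hΩ_inv : IsUnit Ω)
    (hΩ_anti : Ωᵀ = -Ω) (C : ι → ι → ι → ℝ)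
    (h_anti : ∀ M N P, C M N P = -C M P N)
    (h_symp : ∀ M N P, (∑ Q, Ω N Q * C Q P M) = ∑ Q, Ω M Q * C Q P N) :
    ∀ M N P, C M N P = 0 := by
  have hT_anti : ∀ a b c, (∑ Q, Ω a Q * C Q b c) = -∑ Q, Ω a Q * C Q c b := by
    intro a b c
    rw [← Finset.sum_neg_distrib]
    refine Finset.sum_congr rfl fun Q _ => ?_
    rw [h_anti Q b c, mul_neg]
  have hT : ∀ a b c, (∑ Q, Ω a Q * C Q b c) = 0 := by
    intro a b c
    linarith [h_symp c a b, hT_anti c b a, h_symp b c a, hT_anti b a c,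
      h_symp a b c, hT_anti a c b]
  intro M N P
  have hv : Ω *ᵥ (fun Q => C Q N P) = Ω *ᵥ 0 := by
    rw [Matrix.mulVec_zero]
    funext a
    exact hT a N P
  exact congrFun (Matrix.mulVec_injective_of_isUnit hΩ_inv hv) M
end

section
/- The quadratic embedding-tensor constraint implies the Jacobi identity for the gauge structure constants: let Γ and ι be finite types, let (f_γ)_{γ∈Γ} be a family of real ι×ι matrices, and let C : Γ → Γ → Γ → ℝ satisfy the commutation relations f_δ f_γ − f_γ f_δ = −Σ_σ C^σ_{δγ} f_σ for all δ, γ ∈ Γ. Let k : Γ → ι → ℝ satisfy the quadratic constraint Σ_{γ,δ} k^γ_I k^δ_J C^σ_{γδ} − Σ_{γ,K} (f_γ)^K_I k^γ_J k^σ_K = 0 for all I, J ∈ ι and σ ∈ Γ. Define t^I_{JK} := Σ_γ (f_γ)^I_J k^γ_K and assume t^I_{JK} = −t^I_{KJ} for all I, J, K. Then t satisfies the Jacobi identity: Σ_J ( t^I_{JK} t^J_{LM} + t^I_{JL} t^J_{MK} + t^I_{JM} t^J_{KL} ) = 0 for all I, K, L, M ∈ ι. -/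
open Finset

/-- The quadratic embedding-tensor constraint implies the Jacobi identity for
the gauge structure constants `t^I_{JK} = Σ_γ (f_γ)^I_J k^γ_K`. -/
theorem embedding_tensor_jacobi {Γ ι : Type*} [Fintype Γ] [Fintype ι]
    (f : Γ → Matrix ι ι ℝ) (C : Γ → Γ → Γ → ℝ)
    (h_comm : ∀ δ γ : Γ, f δ * f γ - f γ * f δ = -∑ σ : Γ, C σ δ γ • f σ)
    (k : Γ → ι → ℝ)
    (h_quad : ∀ (I J : ι) (σ : Γ),
      (∑ γ : Γ, ∑ δ : Γ, k γ I * k δ J * C σ γ δ) -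
        (∑ γ : Γ, ∑ K : ι, f γ K I * k γ J * k σ K) = 0)
    (t : ι → ι → ι → ℝ)
    (ht : ∀ I J K, t I J K = ∑ γ : Γ, f γ I J * k γ K)
    (h_anti : ∀ I J K, t I J K = -t I K J) :
    ∀ I K L M : ι,
      ∑ J : ι, (t I J K * t J L M + t I J L * t J M K + t I J M * t J K L)
        = 0 := by
  have key : ∀ L M : ι,
      (∑ γ, k γ L • f γ) * (∑ γ, k γ M • f γ) - (∑ γ, k γ M • f γ) * (∑ γ, k γ L • f γ)
        = -∑ J, t J L M • (∑ γ, k γ J • f γ) := by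
    intro L M
    have h1 : (∑ γ, k γ L • f γ) * (∑ γ, k γ M • f γ)
        - (∑ γ, k γ M • f γ) * (∑ γ, k γ L • f γ)
        = ∑ γ, ∑ δ, (k γ L * k δ M) • (f γ * f δ - f δ * f γ) := by
      rw [Finset.sum_mul_sum, Finset.sum_mul_sum,
        Finset.sum_comm (f := fun i j => (k i M • f i) * (k j L • f j)),
        ← Finset.sum_sub_distrib]
      refine Finset.sum_congr rfl fun γ _ => ?_
      rw [← Finset.sum_sub_distrib]
      refine Finset.sum_congr rfl fun δ _ => ?_
      rw [smul_mul_smul_comm, smul_mul_smul_comm, smul_sub, mul_comm (k δ M)]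
    have h2 : ∑ γ, ∑ δ, (k γ L * k δ M) • (∑ σ, C σ γ δ • f σ)
        = ∑ σ, (∑ γ, ∑ δ, k γ L * k δ M * C σ γ δ) • f σ := by
      simp only [Finset.smul_sum, Finset.sum_smul, smul_smul]
      symm
      rw [Finset.sum_comm]
      exact Finset.sum_congr rfl fun γ _ => Finset.sum_comm
    have h3 : ∑ J, t J L M • (∑ γ, k γ J • f γ)
        = ∑ σ, (∑ γ, ∑ J, f γ J L * k γ M * k σ J) • f σ := by
      simp only [Finset.smul_sum, smul_smul]
      rw [Finset.sum_comm]
      refine Finset.sum_congr rfl fun σ _ => ?_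
      rw [← Finset.sum_smul, Finset.sum_comm]
      simp only [ht, Finset.sum_mul]
    rw [h1, h3]
    simp only [h_comm, smul_neg, Finset.sum_neg_distrib]
    rw [h2]
    congr 1
    refine Finset.sum_congr rfl fun σ _ => ?_
    rw [sub_eq_zero.mp (h_quad L M σ)]
  intro I K L M
  have hT : ∀ A I J, (∑ γ, k γ A • f γ) I J = t I J A := by
    intro A I J
    rw [ht, Matrix.sum_apply]
    exact Finset.sum_congr rfl fun γ _ => by simp [mul_comm]
  have h := congrFun (congrFun (key L M) I) K
  simp only [Matrix.sub_apply, Matrix.neg_apply, Matrix.mul_apply, Matrix.sum_apply (s := (Finset.univ : Finset ι)),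
    Matrix.smul_apply, hT, smul_eq_mul] at h
  have e : ∀ J, t I J K * t J L M + t I J L * t J M K + t I J M * t J K L
      = -(t J L M * t I K J) - (t I J L * t J K M - t I J M * t J K L) := by
    intro J
    rw [h_anti I K J, h_anti J K M]; ring
  simp only [e, Finset.sum_sub_distrib, Finset.sum_neg_distrib]
  rw [h]; ring
end

section
/- The two quadratic field-strength invariants in four dimensions are independent: let ι be a finite type and let M, N : ι → ι → ℝ be symmetric (M_{IJ} = M_{JI}, N_{IJ} = N_{JI}). Suppose that for every family F : ι → Matrix (Fin 4) (Fin 4) ℝ of antisymmetric matrices (F^I_{μν} = −F^I_{νμ}) one has Σ_{I,J} Σ_{μ,ν,ρ,σ} M_{IJ} η^{μρ} η^{νσ} F^I_{μν} F^J_{ρσ} + (1/2) Σ_{I,J} Σ_{μ,ν,ρ,σ} N_{IJ} ε^{μνρσ} F^I_{μν} F^J_{ρσ} = 0, where η = diag(−1,1,1,1) and ε is the Levi-Civita symbol on Fin 4 with ε^{0123} = 1. Then M_{IJ} = 0 and N_{IJ} = 0 for all I, J. -/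
open Finset

/-- The Minkowski metric `η = diag(−1,1,1,1)` on `Fin 4`. -/
def minkEta (μ ν : Fin 4) : ℝ :=
  if μ = ν then (if μ = 0 then -1 else 1) else 0

/-- The Levi-Civita symbol on `Fin 4`, normalized by `ε(0,1,2,3) = 1`,
realized as the determinant of the matrix whose rows are the corresponding
standard basis vectors. -/
noncomputable def levCivita (μ ν ρ σ : Fin 4) : ℝ :=
  Matrix.det (Matrix.of fun i j => if ![μ, ν, ρ, σ] i = j then (1 : ℝ) else 0)

lemma aux_quad {ι : Type*} [Fintype ι] (A : ι → ι → ℝ) (hA : ∀ I J, A I J = A J I)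
    (h : ∀ x : ι → ℝ, ∑ I, ∑ J, A I J * (x I * x J) = 0) : ∀ I J, A I J = 0 := by
  classical
  have key : ∀ I J, ∑ K, ∑ L, A K L * ((Pi.single I 1 : ι → ℝ) K * (Pi.single J 1 : ι → ℝ) L)
      = A I J := by
    intro I J
    simp [Pi.single_apply]
  intro I J
  have h1 := h (Pi.single I 1)
  have h2 := h (Pi.single J 1)
  have h3 := h (Pi.single I 1 + Pi.single J 1)
  rw [key] at h1 h2
  simp only [Pi.add_apply, add_mul, mul_add, Finset.sum_add_distrib, key] at h3
  linarith [hA I J]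

def auxF (x y : ℝ) : Matrix (Fin 4) (Fin 4) ℝ :=
  !![0, x, 0, 0; -x, 0, 0, 0; 0, 0, 0, y; 0, 0, -y, 0]

lemma auxF_anti (x y : ℝ) : Matrix.transpose (auxF x y) = -(auxF x y) := by
  ext i j
  fin_cases i <;> fin_cases j <;> simp [auxF]

lemma auxM (m x y x' y' : ℝ) : (∑ μ, ∑ ν, ∑ ρ, ∑ σ,
    m * minkEta μ ρ * minkEta ν σ * auxF x y μ ν * auxF x' y' ρ σ)
    = m * (-2 * (x * x') + 2 * (y * y')) := by
  simp [Fin.sum_univ_four, auxF, minkEta]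
  ring

lemma lev_int (a b c d : Fin 4) : levCivita a b c d =
    ((Matrix.det (Matrix.of fun i j => if ![a, b, c, d] i = j then (1 : ℤ) else 0) : ℤ) : ℝ) := by
  rw [levCivita, Int.cast_det]
  congr 1
  ext i j
  simp

lemma lev_0101 : levCivita 0 1 0 1 = 0 := by
  rw [lev_int]; norm_cast

lemma lev_0110 : levCivita 0 1 1 0 = 0 := by
  rw [lev_int]; norm_cast

lemma lev_0123 : levCivita 0 1 2 3 = 1 := by
  rw [lev_int]; norm_cast

lemma lev_0132 : levCivita 0 1 3 2 = -1 := by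
  rw [lev_int]; norm_cast

lemma lev_1001 : levCivita 1 0 0 1 = 0 := by
  rw [lev_int]; norm_cast

lemma lev_1010 : levCivita 1 0 1 0 = 0 := by
  rw [lev_int]; norm_cast

lemma lev_1023 : levCivita 1 0 2 3 = -1 := by
  rw [lev_int]; norm_cast

lemma lev_1032 : levCivita 1 0 3 2 = 1 := by
  rw [lev_int]; norm_cast

lemma lev_2301 : levCivita 2 3 0 1 = 1 := by
  rw [lev_int]; norm_cast

lemma lev_2310 : levCivita 2 3 1 0 = -1 := by
  rw [lev_int]; norm_cast

lemma lev_2323 : levCivita 2 3 2 3 = 0 := by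
  rw [lev_int]; norm_cast

lemma lev_2332 : levCivita 2 3 3 2 = 0 := by
  rw [lev_int]; norm_cast

lemma lev_3201 : levCivita 3 2 0 1 = -1 := by
  rw [lev_int]; norm_cast

lemma lev_3210 : levCivita 3 2 1 0 = 1 := by
  rw [lev_int]; norm_cast

lemma lev_3223 : levCivita 3 2 2 3 = 0 := by
  rw [lev_int]; norm_cast

lemma lev_3232 : levCivita 3 2 3 2 = 0 := by
  rw [lev_int]; norm_cast

lemma auxN (m x y x' y' : ℝ) : (∑ μ, ∑ ν, ∑ ρ, ∑ σ,
    m * levCivita μ ν ρ σ * auxF x y μ ν * auxF x' y' ρ σ)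
    = m * (4 * (x * y') + 4 * (y * x')) := by
  simp [Fin.sum_univ_four, auxF]
  simp only [lev_0101, lev_0110, lev_0123, lev_0132, lev_1001, lev_1010, lev_1023, lev_1032, lev_2301, lev_2310, lev_2323, lev_2332, lev_3201, lev_3210, lev_3223, lev_3232]
  ring

/-- Independence of the two quadratic field-strength invariants in four
dimensions: if symmetric coefficient matrices `M`, `N` satisfy
`Σ M_{IJ} η^{μρ} η^{νσ} F^I_{μν} F^J_{ρσ}
  + (1/2) Σ N_{IJ} ε^{μνρσ} F^I_{μν} F^J_{ρσ} = 0`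
for every family of antisymmetric field strengths `F`, then `M = 0 = N`. -/
theorem quadratic_invariants_independent {ι : Type*} [Fintype ι]
    (M N : ι → ι → ℝ)
    (hM : ∀ I J, M I J = M J I) (hN : ∀ I J, N I J = N J I)
    (h : ∀ F : ι → Matrix (Fin 4) (Fin 4) ℝ,
      (∀ I, Matrix.transpose (F I) = -(F I)) →
      (∑ I, ∑ J, ∑ μ, ∑ ν, ∑ ρ, ∑ σ,
          M I J * minkEta μ ρ * minkEta ν σ * F I μ ν * F J ρ σ) +
        (1 / 2) * (∑ I, ∑ J, ∑ μ, ∑ ν, ∑ ρ, ∑ σ,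
          N I J * levCivita μ ν ρ σ * F I μ ν * F J ρ σ) = 0) :
    (∀ I J, M I J = 0) ∧ (∀ I J, N I J = 0) := by
  have h' : ∀ x y : ι → ℝ,
      (∑ I, ∑ J, M I J * (-2 * (x I * x J) + 2 * (y I * y J))) +
        (1 / 2) * (∑ I, ∑ J, N I J * (4 * (x I * y J) + 4 * (y I * x J))) = 0 := by
    intro x y
    have := h (fun I => auxF (x I) (y I)) (fun I => auxF_anti _ _)
    simpa only [auxM, auxN] using this
  have hM0 : ∀ I J, M I J = 0 := by
    apply aux_quad M hM
    intro x
    have h1 := h' 0 x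
    have e : ∀ I J, M I J * (2 * (x I * x J)) = 2 * (M I J * (x I * x J)) := by
      intros; ring
    simp only [Pi.zero_apply, zero_mul, mul_zero, zero_add, add_zero, Finset.sum_const_zero, e,
      ← Finset.mul_sum] at h1
    linarith
  refine ⟨hM0, aux_quad N hN ?_⟩
  intro x
  have h1 := h' x x
  have e : ∀ I J, N I J * (4 * (x I * x J) + 4 * (x I * x J)) = 8 * (N I J * (x I * x J)) := by
    intros; ring
  simp only [hM0, zero_mul, Finset.sum_const_zero, zero_add, e, ← Finset.mul_sum] at h1
  linarith
end
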